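/- Let I and P be positive integers, and let η, L > 0 satisfy η ≤ 1/(60·L·I·P); set q₁ = 18·η²·L²·I and q₂ = 15·η²·L²·I·P. Let a₀,…,a_{P−1} and b₀,…,b_{P−1} be nonnegative reals (with the convention a_s = b_s = 0 for s ≥ P). Suppose d, m : {0,…,I·P} → [0,∞) satisfy d₀ = m₀ = 0, d_t = 0 whenever k_t = 0, and for every 1 ≤ t ≤ I·P: m_t ≤ (1 + 1/(I·P))·m_{t−1} + q₂·d_{t−1} + b_{r_{t−1}}, and if k_t ≠ 0 then d_t ≤ (1 + 1/I)·d_{t−1} + q₁·m_{t−1} + a_{r_{t−1}}. Then for every 0 ≤ t ≤ I·P: d_t ≤ 2·I·a_{r_t} + 24·q₁·q₂·I³·Σ_{s=0}^{r_t} a_s + 36·q₁·I²·P·Σ_{s=0}^{r_t} b_s. -/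

import Mathlib

open Finset

/-!
On the `r`-th block, a bound `m ≤ M r` turns the recursion for `d` into one with constant forcing
`a r + q₁ * M r`; as `d` restarts from `0` at the beginning of the block and
`(1 + 1 / I) ^ I ≤ exp 1 ≤ 3`, this gives `d ≤ 2 * I * (a r + q₁ * M r)`. Inserting this into the
recursion for `m` and applying a discrete Grönwall inequality over the whole horizon `I * P` bounds
`m` by three times the accumulated forcing. That forcing contains `M` itself, but only with a factor
`q₁ * q₂ * I ^ 2 * P`, so when this product is small `M` can be chosen with the resulting bound on
`m` again at most `M`, and strong induction on time closes the loop.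
-/

section OrderedSemiring

variable {R : Type*} [CommSemiring R] [PartialOrder R] [IsOrderedRing R]

lemma le_pow_mul_sum_range_of_le_mul_add {ρ : R} {u f : ℕ → R} {T : ℕ} (hρ : 1 ≤ ρ)
    (hf : ∀ t, 0 ≤ f t) (hu0 : u 0 ≤ 0) (hu : ∀ t < T, u (t + 1) ≤ ρ * u t + f t) :
    u T ≤ ρ ^ T * ∑ j ∈ range T, f j := by
  have hρ0 : 0 ≤ ρ := zero_le_one.trans hρ
  induction T with
  | zero => simpa using hu0
  | succ T ih =>
    have ih : u T ≤ ρ ^ T * ∑ j ∈ range T, f j := ih fun t ht ↦ hu t (by omega)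
    calc u (T + 1) ≤ ρ * u T + f T := hu T (by omega)
      _ ≤ ρ * (ρ ^ T * ∑ j ∈ range T, f j) + ρ ^ (T + 1) * f T := by
        gcongr
        exact le_mul_of_one_le_left (hf T) (one_le_pow₀ hρ)
      _ = ρ ^ (T + 1) * ∑ j ∈ range (T + 1), f j := by rw [sum_range_succ]; ring

lemma le_geom_sum_mul_of_reset {ρ : R} {u c : ℕ → R} {k T : ℕ} (hρ : 0 ≤ ρ)
    (hreset : ∀ t ≤ T, t % k = 0 → u t ≤ 0)
    (hu : ∀ t < T, (t + 1) % k ≠ 0 → u (t + 1) ≤ ρ * u t + c (t / k)) :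
    u T ≤ (∑ i ∈ range (T % k), ρ ^ i) * c (T / k) := by
  induction T with
  | zero => simpa using hreset 0 le_rfl (Nat.zero_mod k)
  | succ T ih =>
    by_cases hT : (T + 1) % k = 0
    · simpa [hT] using hreset (T + 1) le_rfl hT
    · have hdiv : (T + 1) / k = T / k :=
        Nat.succ_div_of_not_dvd fun h ↦ hT (Nat.mod_eq_zero_of_dvd h)
      have hmod : (T + 1) % k = T % k + 1 := by
        have h₁ := Nat.div_add_mod (T + 1) k
        have h₀ := Nat.div_add_mod T k
        rw [hdiv] at h₁
        omega
      have ih := ih (fun t ht ↦ hreset t (by omega)) (fun t ht ↦ hu t (by omega))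
      rw [hdiv, hmod]
      calc u (T + 1) ≤ ρ * u T + c (T / k) := hu T (by omega) hT
        _ ≤ ρ * ((∑ i ∈ range (T % k), ρ ^ i) * c (T / k)) + c (T / k) := by gcongr
        _ = (∑ i ∈ range (T % k + 1), ρ ^ i) * c (T / k) := by rw [geom_sum_succ]; ring

lemma sum_range_add_mul_sum_range_succ_le {c : ℕ → R} {l : R} (hc : ∀ s, 0 ≤ c s) (hl : 0 ≤ l)
    (n : ℕ) :
    ∑ s ∈ range n, (c s + l * ∑ i ∈ range (s + 1), c i) ≤ (1 + n * l) * ∑ s ∈ range n, c s :=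
  calc ∑ s ∈ range n, (c s + l * ∑ i ∈ range (s + 1), c i)
      ≤ ∑ s ∈ range n, (c s + l * ∑ i ∈ range n, c i) := by
        gcongr with s hs
        · exact fun i _ _ ↦ hc i
        · exact mem_range.1 hs
    _ = (1 + n * l) * ∑ s ∈ range n, c s := by
        rw [sum_add_distrib, sum_const, card_range, nsmul_eq_mul]; ring

end OrderedSemiring

lemma sum_range_mul_comp_div {M : Type*} [AddCommMonoid M] (f : ℕ → M) (k n : ℕ) :
    ∑ j ∈ range (k * n), f (j / k) = k • ∑ s ∈ range n, f s := by
  induction n with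
  | zero => simp
  | succ n ih =>
    have hblock : ∀ x ∈ range k, f ((k * n + x) / k) = f n := fun x hx ↦ by
      have hx : x < k := mem_range.1 hx
      rw [Nat.mul_add_div (by omega), Nat.div_eq_of_lt hx, add_zero]
    rw [Nat.mul_succ, sum_range_add, ih, sum_congr rfl hblock, sum_const, card_range,
      sum_range_succ, nsmul_add]

lemma sum_range_comp_div_le {M : Type*} [AddCommMonoid M] [PartialOrder M] [IsOrderedAddMonoid M]
    {f : ℕ → M} (hf : ∀ s, 0 ≤ f s) {k : ℕ} (hk : 0 < k) (t : ℕ) :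
    ∑ j ∈ range t, f (j / k) ≤ k • ∑ s ∈ range (t / k + 1), f s := by
  rw [← sum_range_mul_comp_div]
  exact sum_le_sum_of_subset_of_nonneg
    (range_subset_range.2 (Nat.lt_mul_div_succ t hk).le) fun _ _ _ ↦ hf _

lemma one_add_one_div_pow_le_three {k n : ℕ} (hk : k ≤ n) : (1 + 1 / (n : ℝ)) ^ k ≤ 3 :=
  calc (1 + 1 / (n : ℝ)) ^ k ≤ (1 + 1 / (n : ℝ)) ^ n :=
        pow_le_pow_right₀ (le_add_of_nonneg_right (by positivity)) hk
    _ ≤ Real.exp 1 := by simpa only [one_div] using Real.one_add_inv_pow_le_exp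
    _ ≤ 3 := Real.exp_one_lt_three.le

lemma geom_sum_one_add_one_div_le {k n : ℕ} (hn : 0 < n) (hk : k ≤ n) :
    ∑ i ∈ range k, (1 + 1 / (n : ℝ)) ^ i ≤ 2 * n := by
  have hn0 : (n : ℝ) ≠ 0 := by positivity
  have hsum : ∑ i ∈ range k, (1 + 1 / (n : ℝ)) ^ i = n * ((1 + 1 / (n : ℝ)) ^ k - 1) := by
    rw [← mul_geom_sum, add_sub_cancel_left, ← mul_assoc, mul_one_div_cancel hn0, one_mul]
  rw [hsum, mul_comm]
  gcongr
  linarith [one_add_one_div_pow_le_three hk]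

lemma le_three_mul_sum_of_le_one_add_one_div_mul_add {N T : ℕ} {u f : ℕ → ℝ} (hT : T ≤ N)
    (hf : ∀ t, 0 ≤ f t) (hu0 : u 0 ≤ 0)
    (hu : ∀ t < T, u (t + 1) ≤ (1 + 1 / (N : ℝ)) * u t + f t) :
    u T ≤ 3 * ∑ j ∈ range T, f j :=
  calc u T ≤ (1 + 1 / (N : ℝ)) ^ T * ∑ j ∈ range T, f j :=
        le_pow_mul_sum_range_of_le_mul_add (le_add_of_nonneg_right (by positivity)) hf hu0 hu
    _ ≤ 3 * ∑ j ∈ range T, f j := by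
        gcongr
        · exact sum_nonneg fun j _ ↦ hf j
        · exact one_add_one_div_pow_le_three hT

lemma le_two_mul_mul_of_reset {k T : ℕ} {u c : ℕ → ℝ} (hk : 0 < k) (hc : ∀ r, 0 ≤ c r)
    (hreset : ∀ t ≤ T, t % k = 0 → u t ≤ 0)
    (hu : ∀ t < T, (t + 1) % k ≠ 0 → u (t + 1) ≤ (1 + 1 / (k : ℝ)) * u t + c (t / k)) :
    u T ≤ 2 * k * c (T / k) :=
  calc u T ≤ (∑ i ∈ range (T % k), (1 + 1 / (k : ℝ)) ^ i) * c (T / k) :=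
        le_geom_sum_mul_of_reset (by positivity) hreset hu
    _ ≤ 2 * k * c (T / k) := by
        gcongr
        · exact hc _
        · exact geom_sum_one_add_one_div_le hk (Nat.mod_lt T hk).le

/-- The bound on `m` over the `r`-th block of length `I` in the coupled drift recursion. The summand
is the forcing of `m` in block `s` when `d` is replaced by `2 * I * a s`; the constant is
`7 / 2 = 3 * (7 / 6)`, with `3` coming from Grönwall's inequality and `7 / 6` absorbing the
feedback of `m` on itself through `d`. -/
noncomputable def blockEnvelope (I : ℕ) (q₂ : ℝ) (a b : ℕ → ℝ) (r : ℕ) : ℝ :=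
  7 / 2 * I * ∑ s ∈ range (r + 1), (2 * I * q₂ * a s + b s)

section DriftRecursion

variable {I P : ℕ} {q₁ q₂ : ℝ} {a b d m : ℕ → ℝ}

lemma blockEnvelope_nonneg (hq₂ : 0 ≤ q₂) (ha : ∀ s, 0 ≤ a s) (hb : ∀ s, 0 ≤ b s) (r : ℕ) :
    0 ≤ blockEnvelope I q₂ a b r :=
  mul_nonneg (by positivity) <| sum_nonneg fun s _ ↦
    add_nonneg (mul_nonneg (by positivity) (ha s)) (hb s)

lemma blockEnvelope_eq (r : ℕ) :
    blockEnvelope I q₂ a b r = 7 * q₂ * I ^ 2 * ∑ s ∈ range (r + 1), a s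
      + 7 / 2 * I * ∑ s ∈ range (r + 1), b s := by
  rw [blockEnvelope, sum_add_distrib, ← mul_sum]
  ring

lemma sum_forcing_le_blockEnvelope {r : ℕ} (hr : r < P) (hq₁ : 0 ≤ q₁) (hq₂ : 0 ≤ q₂)
    (hq : q₁ * q₂ * I ^ 2 * P ≤ 1 / 42) (ha : ∀ s, 0 ≤ a s) (hb : ∀ s, 0 ≤ b s) :
    3 * (I * ∑ s ∈ range (r + 1), (q₂ * (2 * I * (a s + q₁ * blockEnvelope I q₂ a b s)) + b s))
      ≤ blockEnvelope I q₂ a b r := by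
  set c : ℕ → ℝ := fun s ↦ 2 * I * q₂ * a s + b s with hc_def
  set l : ℝ := 7 * (q₁ * q₂ * I ^ 2) with hl_def
  have hc : ∀ s, 0 ≤ c s := fun s ↦ add_nonneg (mul_nonneg (by positivity) (ha s)) (hb s)
  have hfeedback : (r + 1 : ℕ) * l ≤ 1 / 6 :=
    calc (r + 1 : ℕ) * l ≤ P * l := by gcongr; omega
      _ ≤ 1 / 6 := by linarith
  have hforcing : ∀ s, q₂ * (2 * I * (a s + q₁ * blockEnvelope I q₂ a b s)) + b s
      = c s + l * ∑ i ∈ range (s + 1), c i := fun s ↦ by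
    simp only [blockEnvelope, hc_def, hl_def]
    ring
  simp only [hforcing]
  calc 3 * (I * ∑ s ∈ range (r + 1), (c s + l * ∑ i ∈ range (s + 1), c i))
      ≤ 3 * (I * ((1 + (r + 1 : ℕ) * l) * ∑ s ∈ range (r + 1), c s)) := by
        gcongr
        exact sum_range_add_mul_sum_range_succ_le hc (by positivity) _
    _ ≤ 3 * (I * ((1 + 1 / 6) * ∑ s ∈ range (r + 1), c s)) := by
        gcongr
        exact sum_nonneg fun s _ ↦ hc s
    _ = blockEnvelope I q₂ a b r := by rw [blockEnvelope]; ring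

lemma drift_le_of_le_blockEnvelope {T : ℕ} (hI : 0 < I) (hq₁ : 0 ≤ q₁) (hq₂ : 0 ≤ q₂)
    (ha : ∀ s, 0 ≤ a s) (hb : ∀ s, 0 ≤ b s)
    (hd : ∀ t ≤ T, t % I = 0 → d t ≤ 0)
    (hdrec : ∀ t < T, (t + 1) % I ≠ 0 →
      d (t + 1) ≤ (1 + 1 / (I : ℝ)) * d t + q₁ * m t + a (t / I))
    (hm : ∀ t < T, m t ≤ blockEnvelope I q₂ a b (t / I)) :
    d T ≤ 2 * I * (a (T / I) + q₁ * blockEnvelope I q₂ a b (T / I)) := by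
  refine le_two_mul_mul_of_reset (c := fun r ↦ a r + q₁ * blockEnvelope I q₂ a b r) hI
    (fun r ↦ add_nonneg (ha r) (mul_nonneg hq₁ (blockEnvelope_nonneg hq₂ ha hb r))) hd
    fun t ht htI ↦ ?_
  have hmt : q₁ * m t ≤ q₁ * blockEnvelope I q₂ a b (t / I) := by gcongr; exact hm t ht
  linarith [hdrec t ht htI]

lemma le_blockEnvelope_of_drift_le {T : ℕ} (hI : 0 < I) (hT : T < I * P) (hq₁ : 0 ≤ q₁)
    (hq₂ : 0 ≤ q₂) (hq : q₁ * q₂ * I ^ 2 * P ≤ 1 / 42) (ha : ∀ s, 0 ≤ a s) (hb : ∀ s, 0 ≤ b s)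
    (hm0 : m 0 ≤ 0)
    (hmrec : ∀ t < T, m (t + 1) ≤ (1 + 1 / ((I : ℝ) * P)) * m t + q₂ * d t + b (t / I))
    (hd : ∀ t < T, d t ≤ 2 * I * (a (t / I) + q₁ * blockEnvelope I q₂ a b (t / I))) :
    m T ≤ blockEnvelope I q₂ a b (T / I) := by
  let f : ℕ → ℝ := fun s ↦ q₂ * (2 * I * (a s + q₁ * blockEnvelope I q₂ a b s)) + b s
  have hf : ∀ s, 0 ≤ f s := fun s ↦ by
    have := ha s
    have := hb s
    have := blockEnvelope_nonneg (I := I) hq₂ ha hb s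
    positivity
  have hrec : ∀ t < T, m (t + 1) ≤ (1 + 1 / ((I * P : ℕ) : ℝ)) * m t + f (t / I) := fun t ht ↦ by
    have hdt := mul_le_mul_of_nonneg_left (hd t ht) hq₂
    rw [Nat.cast_mul]
    linarith [hmrec t ht]
  calc m T ≤ 3 * ∑ j ∈ range T, f (j / I) :=
        le_three_mul_sum_of_le_one_add_one_div_mul_add hT.le (fun t ↦ hf (t / I)) hm0 hrec
    _ ≤ 3 * (I * ∑ s ∈ range (T / I + 1), f s) := by
        rw [← nsmul_eq_mul]
        gcongr
        exact sum_range_comp_div_le hf hI T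
    _ ≤ blockEnvelope I q₂ a b (T / I) :=
        sum_forcing_le_blockEnvelope (Nat.div_lt_of_lt_mul hT) hq₁ hq₂ hq ha hb

lemma le_blockEnvelope_of_recursion (hI : 0 < I) (hq₁ : 0 ≤ q₁) (hq₂ : 0 ≤ q₂)
    (hq : q₁ * q₂ * I ^ 2 * P ≤ 1 / 42) (ha : ∀ s, 0 ≤ a s) (hb : ∀ s, 0 ≤ b s)
    (hm0 : m 0 ≤ 0) (hd : ∀ t ≤ I * P, t % I = 0 → d t ≤ 0)
    (hmrec : ∀ t < I * P, m (t + 1) ≤ (1 + 1 / ((I : ℝ) * P)) * m t + q₂ * d t + b (t / I))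
    (hdrec : ∀ t < I * P, (t + 1) % I ≠ 0 →
      d (t + 1) ≤ (1 + 1 / (I : ℝ)) * d t + q₁ * m t + a (t / I)) :
    ∀ t < I * P, m t ≤ blockEnvelope I q₂ a b (t / I) := by
  intro t
  induction t using Nat.strong_induction_on with
  | h t ih =>
    intro ht
    refine le_blockEnvelope_of_drift_le hI ht hq₁ hq₂ hq ha hb hm0
      (fun s hs ↦ hmrec s (hs.trans ht)) fun s hs ↦ ?_
    exact drift_le_of_le_blockEnvelope hI hq₁ hq₂ ha hb (fun j hj ↦ hd j (by omega))
      (fun j hj ↦ hdrec j (by omega)) fun j hj ↦ ih j (by omega) (by omega)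

theorem drift_recursion_bound_d_general (hI : 0 < I) (hq₁ : 0 ≤ q₁) (hq₂ : 0 ≤ q₂)
    (hq : q₁ * q₂ * I ^ 2 * P ≤ 1 / 42) (ha : ∀ s, 0 ≤ a s) (hb : ∀ s, 0 ≤ b s)
    (hm0 : m 0 ≤ 0) (hd : ∀ t ≤ I * P, t % I = 0 → d t ≤ 0)
    (hmrec : ∀ t < I * P, m (t + 1) ≤ (1 + 1 / ((I : ℝ) * P)) * m t + q₂ * d t + b (t / I))
    (hdrec : ∀ t < I * P, (t + 1) % I ≠ 0 →
      d (t + 1) ≤ (1 + 1 / (I : ℝ)) * d t + q₁ * m t + a (t / I)) :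
    ∀ t ≤ I * P,
      d t ≤ 2 * I * a (t / I) + 14 * q₁ * q₂ * I ^ 3 * ∑ s ∈ range (t / I + 1), a s
        + 7 * q₁ * I ^ 2 * ∑ s ∈ range (t / I + 1), b s := by
  intro t ht
  have hm := le_blockEnvelope_of_recursion hI hq₁ hq₂ hq ha hb hm0 hd hmrec hdrec
  calc d t ≤ 2 * I * (a (t / I) + q₁ * blockEnvelope I q₂ a b (t / I)) :=
        drift_le_of_le_blockEnvelope hI hq₁ hq₂ ha hb (fun s hs ↦ hd s (hs.trans ht))
          (fun s hs ↦ hdrec s (hs.trans_le ht)) fun s hs ↦ hm s (hs.trans_le ht)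
    _ = _ := by rw [blockEnvelope_eq]; ring

lemma feedback_le_of_stepsize_le {η L : ℝ} (hI : 0 < I) (hP : 0 < P) (hη : 0 ≤ η) (hL : 0 < L)
    (hηle : η ≤ 1 / (60 * L * I * P)) :
    18 * η ^ 2 * L ^ 2 * I * (15 * η ^ 2 * L ^ 2 * I * P) * I ^ 2 * P ≤ 1 / 42 := by
  have hP1 : (1 : ℝ) ≤ P := by exact_mod_cast hP
  have hy : η * L * I * P ≤ 1 / 60 := by
    rw [le_div_iff₀ (by positivity)] at hηle
    linarith
  calc 18 * η ^ 2 * L ^ 2 * I * (15 * η ^ 2 * L ^ 2 * I * P) * I ^ 2 * P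
      = 270 * ((η * L * I) ^ 4 * (P : ℝ) ^ 2) := by ring
    _ ≤ 270 * ((η * L * I) ^ 4 * (P : ℝ) ^ 4) := by gcongr; norm_num
    _ = 270 * (η * L * I * P) ^ 4 := by ring
    _ ≤ 270 * (1 / 60) ^ 4 := by gcongr
    _ ≤ 1 / 42 := by norm_num

end DriftRecursion

/-- Unrolled recursion bound on the client-drift quantity `d` from the proof of
Lemma 1 (Amplified SCAFFOLD).  Here `r_t = t / I` and `k_t = t % I`. -/
theorem drift_recursion_bound_d
    (I P : ℕ) (hI : 0 < I) (hP : 0 < P)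
    (η L : ℝ) (hη : 0 < η) (hL : 0 < L)
    (hηle : η ≤ 1 / (60 * L * I * P))
    (q₁ q₂ : ℝ)
    (hq₁ : q₁ = 18 * η ^ 2 * L ^ 2 * I)
    (hq₂ : q₂ = 15 * η ^ 2 * L ^ 2 * I * P)
    (a b : ℕ → ℝ)
    (ha0 : ∀ s, 0 ≤ a s) (hb0 : ∀ s, 0 ≤ b s)
    (haP : ∀ s, P ≤ s → a s = 0) (hbP : ∀ s, P ≤ s → b s = 0)
    (d m : ℕ → ℝ)
    (hd0 : ∀ t, t ≤ I * P → 0 ≤ d t) (hm0 : ∀ t, t ≤ I * P → 0 ≤ m t)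
    (hdinit : d 0 = 0) (hminit : m 0 = 0)
    (hdk : ∀ t, t ≤ I * P → t % I = 0 → d t = 0)
    (hmrec : ∀ t, 1 ≤ t → t ≤ I * P →
      m t ≤ (1 + 1 / ((I : ℝ) * P)) * m (t - 1) + q₂ * d (t - 1) + b ((t - 1) / I))
    (hdrec : ∀ t, 1 ≤ t → t ≤ I * P → t % I ≠ 0 →
      d t ≤ (1 + 1 / (I : ℝ)) * d (t - 1) + q₁ * m (t - 1) + a ((t - 1) / I)) :
    ∀ t, t ≤ I * P →
      d t ≤ 2 * I * a (t / I) + 24 * q₁ * q₂ * I ^ 3 * ∑ s ∈ Finset.range (t / I + 1), a s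
        + 36 * q₁ * I ^ 2 * P * ∑ s ∈ Finset.range (t / I + 1), b s := by
  subst hq₁ hq₂
  intro t ht
  have hA : 0 ≤ ∑ s ∈ range (t / I + 1), a s := sum_nonneg fun s _ ↦ ha0 s
  have hB : 0 ≤ ∑ s ∈ range (t / I + 1), b s := sum_nonneg fun s _ ↦ hb0 s
  have hP1 : (1 : ℝ) ≤ P := by exact_mod_cast hP
  refine (drift_recursion_bound_d_general hI (by positivity) (by positivity)
    (feedback_le_of_stepsize_le hI hP hη.le hL hηle) ha0 hb0 hminit.le
    (fun s hs hsI ↦ (hdk s hs hsI).le) (fun s hs ↦ hmrec (s + 1) (by omega) hs)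
    (fun s hs ↦ hdrec (s + 1) (by omega) hs) t ht).trans ?_
  gcongr _ + ?_ * _ * _ * _ * _ + ?_ * _
  · norm_num
  · calc 7 * (18 * η ^ 2 * L ^ 2 * I) * I ^ 2 ≤ 36 * (18 * η ^ 2 * L ^ 2 * I) * (I : ℝ) ^ 2 := by
          gcongr; norm_num
      _ ≤ 36 * (18 * η ^ 2 * L ^ 2 * I) * I ^ 2 * P := le_mul_of_one_le_right (by positivity) hP1
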